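/- Let m and ℓ be integers with m ≥ 2, ℓ ≥ 2 and (m,ℓ) ≠ (2,2). Then the center of G(m,ℓ) is infinite cyclic, generated by Δ^{m/gcd(m,ℓ)}; in particular Δ^{m/gcd(m,ℓ)} has infinite order and the center equals the set of its integer powers. -/

import Mathlib

/-- The word `a_i a_{i+1} ⋯ a_{i+p-1}` (indices mod `m`) in the free group on `ZMod m`. -/
def circWord (m : ℕ) (i : ZMod m) (p : ℕ) : FreeGroup (ZMod m) :=
  ((List.range p).map (fun k => FreeGroup.of (i + (k : ZMod m)))).prod

/-- The defining relations of the circular group `G(m,ℓ)`. -/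
def circRels (m ℓ : ℕ) : Set (FreeGroup (ZMod m)) :=
  { r | ∃ i : ZMod m, r = circWord m i ℓ * (circWord m (i + 1) ℓ)⁻¹ }

/-- The circular group `G(m,ℓ)`. -/
abbrev CircularGroup (m ℓ : ℕ) := PresentedGroup (circRels m ℓ)

/-- The generator `a_i` of the circular group `G(m,ℓ)`. -/
def circGen (m ℓ : ℕ) (i : ZMod m) : CircularGroup m ℓ :=
  PresentedGroup.of i

/-- The element `s(i,p) = a_i a_{i+1} ⋯ a_{i+p-1}` of the circular group `G(m,ℓ)`. -/
def circS (m ℓ : ℕ) (i : ZMod m) (p : ℕ) : CircularGroup m ℓ :=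
  ((List.range p).map (fun k => circGen m ℓ (i + (k : ZMod m)))).prod

/-- The Garside element `Δ = s(0,ℓ)` of the circular group `G(m,ℓ)`. -/
def circDelta (m ℓ : ℕ) : CircularGroup m ℓ := circS m ℓ 0 ℓ

/-!
Write `m = a d` and `ℓ = b d` with `d = gcd(m, ℓ)`. Comparing the products of `ℓ + 1` consecutive
generators gives `Δ a_{n+ℓ} = a_n Δ`, so `Δ ^ a` is central. Choose `u` with `u b ≡ 1` modulo `a`.
Modulo `Δ ^ a`, the element `τ = Δ ^ u` has order dividing `a` and satisfies `τ ^ b = Δ` and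
`τ a_{n+d} = a_n τ`. Hence the product of the first `ℓ` generators is `υ ^ b τ ^ b` with
`υ = a_0 ⋯ a_{d-1} τ⁻¹`, and the defining relations reduce to `υ ^ b = 1`. The quotient by `⟨Δ ^ a⟩`
is therefore the free product of `ℤ/a`, `ℤ/b` and `d - 1` copies of `ℤ`. At least two factors are
nontrivial, so its center is trivial and `⟨Δ ^ a⟩` is the whole center of `G(m,ℓ)`. The order of
`Δ` is infinite because the homomorphism to `ℤ` sending every generator to `1` sends `Δ` to `ℓ`.
-/

open Monoid (CoprodI)

section FreeProductCenter

variable {ι : Type*}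

theorem neWord_head_index_eq_of_prod_eq {M : ι → Type*} [∀ i, Monoid (M i)] {i j i' j' : ι}
    {w : CoprodI.NeWord M i j} {w' : CoprodI.NeWord M i' j'} (h : w.prod = w'.prod) : i = i' := by
  classical
  have hlist : w.toList = w'.toList :=
    congrArg CoprodI.Word.toList (CoprodI.Word.equiv.symm.injective h)
  have hhead : some (⟨i, w.head⟩ : Σ i, M i) = some ⟨i', w'.head⟩ := by
    rw [← w.toList_head?, hlist, w'.toList_head?]
  exact congrArg Sigma.fst (Option.some.inj hhead)

variable {G : ι → Type*} [∀ i, Group (G i)]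

theorem neWord_prod_notMem_center {i k : ι} (w : CoprodI.NeWord G i i) (hki : k ≠ i)
    [Nontrivial (G k)] : w.prod ∉ Subgroup.center (CoprodI G) := by
  intro hw
  obtain ⟨g, hg⟩ := exists_ne (1 : G k)
  have hcomm : (CoprodI.NeWord.append (.singleton g hg) hki w).prod =
      (CoprodI.NeWord.append w hki.symm (.singleton g hg)).prod := by
    simpa using Subgroup.mem_center_iff.mp hw (CoprodI.of g)
  exact hki (neWord_head_index_eq_of_prod_eq hcomm)

theorem exists_of_mul_neWord_prod_of_ne_one {x : CoprodI G} (hx : x ≠ 1) :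
    ∃ (i : ι) (h : G i), h ≠ 1 ∧
      (x = CoprodI.of h ∨
        ∃ (k j : ι) (w : CoprodI.NeWord G k j), i ≠ k ∧ x = CoprodI.of h * w.prod) := by
  classical
  obtain ⟨v, rfl⟩ : ∃ v : CoprodI.Word G, v.prod = x := CoprodI.Word.equiv.symm.surjective x
  induction v using CoprodI.Word.consRecOn with
  | empty => exact absurd CoprodI.Word.prod_empty hx
  | cons i h v hv hh =>
    refine ⟨i, h, hh, ?_⟩
    rw [CoprodI.Word.prod_cons]
    obtain rfl | hne := eq_or_ne v CoprodI.Word.empty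
    · simp
    · obtain ⟨k, j, w, rfl⟩ := CoprodI.NeWord.of_word v hne
      refine Or.inr ⟨k, j, w, ?_, rfl⟩
      rintro rfl
      exact hv (by simp [CoprodI.Word.fstIdx, CoprodI.NeWord.toWord])

theorem center_coprodI_eq_bot {p q : ι} (hpq : p ≠ q) [Nontrivial (G p)] [Nontrivial (G q)] :
    Subgroup.center (CoprodI G) = ⊥ := by
  refine (Subgroup.eq_bot_iff_forall _).mpr fun x hx => by_contra fun hx1 => ?_
  have not_cyclically_reduced {i : ι} (w : CoprodI.NeWord G i i) : w.prod ≠ x := by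
    rintro rfl
    by_cases hpi : p = i
    · exact neWord_prod_notMem_center w (hpi ▸ hpq.symm) hx
    · exact neWord_prod_notMem_center w hpi hx
  obtain ⟨i, h, hh, hxh | ⟨k, j, w, hik, hxw⟩⟩ := exists_of_mul_neWord_prod_of_ne_one hx1
  · exact not_cyclically_reduced (.singleton h hh) (by simp [hxh])
  · obtain rfl | hij := eq_or_ne i j
    · exact not_cyclically_reduced (.append (.singleton h hh) hik w) (by simp [hxw])
    · -- Conjugating `x` by its first letter moves that letter to the end.
      have hrot : CoprodI.of h * w.prod = w.prod * CoprodI.of h := by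
        have := Subgroup.mem_center_iff.mp hx (CoprodI.of h)
        rwa [hxw, mul_assoc, mul_left_cancel_iff] at this
      have hprod : (CoprodI.NeWord.append (.singleton h hh) hik w).prod =
          (CoprodI.NeWord.append w hij.symm (.singleton h hh)).prod := by simpa using hrot
      exact hik (neWord_head_index_eq_of_prod_eq hprod)

end FreeProductCenter

theorem center_le_ker_of_surjective {G Q : Type*} [Group G] [Group Q] {f : G →* Q}
    (hf : Function.Surjective f) (hQ : Subgroup.center Q = ⊥) : Subgroup.center G ≤ f.ker := by
  intro x hx
  rw [MonoidHom.mem_ker, ← Subgroup.mem_bot, ← hQ, Subgroup.mem_center_iff]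
  intro q
  obtain ⟨y, rfl⟩ := hf q
  rw [← map_mul, ← map_mul, Subgroup.mem_center_iff.mp hx]

/-- The free product of the cyclic groups of orders `n i`, where order `0` means infinite. -/
abbrev CyclicFreeProduct {ι : Type*} (n : ι → ℕ) :=
  CoprodI fun i => Multiplicative (ZMod (n i))

namespace CyclicFreeProduct

variable {ι : Type*} {n : ι → ℕ} {H : Type*} [Group H]

/-- The standard generator of the `i`-th factor. -/
def gen (n : ι → ℕ) (i : ι) : CyclicFreeProduct n :=
  CoprodI.of (i := i) (Multiplicative.ofAdd (1 : ZMod (n i)))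

theorem gen_pow (i : ι) : gen n i ^ n i = 1 := by
  rw [gen, ← map_pow, ← ofAdd_nsmul]
  simp

/-- The homomorphism sending each generator to a prescribed element `h i` with `h i ^ n i = 1`. -/
def lift (h : ι → H) (hh : ∀ i, h i ^ n i = 1) : CyclicFreeProduct n →* H :=
  CoprodI.lift fun i => AddMonoidHom.toMultiplicativeLeft <|
    ZMod.lift (n i) ⟨zmultiplesHom (Additive H) (Additive.ofMul (h i)), by
      simp [← ofMul_pow, hh]⟩

theorem lift_gen (h : ι → H) (hh : ∀ i, h i ^ n i = 1) (i : ι) :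
    lift h hh (gen n i) = h i := by
  have := ZMod.lift_coe (n i) ⟨zmultiplesHom (Additive H) (Additive.ofMul (h i)), by
      simp [← ofMul_pow, hh]⟩ 1
  rw [lift, gen, CoprodI.lift_of]
  simpa using congrArg Additive.toMul this

theorem eq_top_of_forall_gen_mem {K : Subgroup (CyclicFreeProduct n)} (hK : ∀ i, gen n i ∈ K) :
    K = ⊤ := by
  refine (Subgroup.eq_top_iff' K).mpr fun x => ?_
  induction x using CoprodI.induction_on with
  | one => exact K.one_mem
  | mul x y hx hy => exact K.mul_mem hx hy
  | of i g =>
    obtain ⟨k, hk⟩ := ZMod.intCast_surjective g.toAdd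
    have hg : CoprodI.of (M := fun i => Multiplicative (ZMod (n i))) g = gen n i ^ k := by
      rw [gen, ← map_zpow, ← ofAdd_zsmul, zsmul_one, hk, ofAdd_toAdd]
    exact hg ▸ K.zpow_mem (hK i) k

theorem center_eq_bot {p q : ι} (hpq : p ≠ q) (hp : n p ≠ 1) (hq : n q ≠ 1) :
    Subgroup.center (CyclicFreeProduct n) = ⊥ := by
  have : Nontrivial (ZMod (n p)) := ZMod.nontrivial_iff.mpr hp
  have : Nontrivial (ZMod (n q)) := ZMod.nontrivial_iff.mpr hq
  exact center_coprodI_eq_bot hpq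

end CyclicFreeProduct

/-- The product `F i * F (i + 1) * ⋯ * F (i + p - 1)` of `p` consecutive terms of a sequence. -/
def windowProd {H : Type*} [Monoid H] (F : ℕ → H) (i p : ℕ) : H :=
  ((List.range p).map fun k => F (i + k)).prod

section Monoid

variable {H : Type*} [Monoid H] {F : ℕ → H} {c : H} {d : ℕ}

theorem windowProd_zero (F : ℕ → H) (i : ℕ) : windowProd F i 0 = 1 := rfl

theorem windowProd_succ (F : ℕ → H) (i p : ℕ) :
    windowProd F i (p + 1) = windowProd F i p * F (i + p) :=
  List.prod_range_succ _ p

theorem windowProd_add (F : ℕ → H) (i p q : ℕ) :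
    windowProd F i (p + q) = windowProd F i p * windowProd F (i + p) q := by
  induction q with
  | zero => simp [windowProd_zero]
  | succ q ih => rw [← add_assoc, windowProd_succ, windowProd_succ, ih, mul_assoc, add_assoc]

theorem windowProd_succ' (F : ℕ → H) (i p : ℕ) :
    windowProd F i (p + 1) = F i * windowProd F (i + 1) p := by
  rw [add_comm p, windowProd_add]
  simp [windowProd]

theorem windowProd_zero_eq_prod_ofFn (F : ℕ → H) (p : ℕ) :
    windowProd F 0 p = (List.ofFn fun k : Fin p => F k).prod := by
  simp [windowProd, List.ofFn_eq_map, ← List.map_coe_finRange_eq_range, Function.comp_def]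

theorem map_windowProd {K : Type*} [Monoid K] (f : H →* K) (F : ℕ → H) (i p : ℕ) :
    f (windowProd F i p) = windowProd (fun n => f (F n)) i p := by
  simp [windowProd, map_list_prod, Function.comp_def]

theorem semiconjBy_windowProd (hF : ∀ n, SemiconjBy c (F (n + d)) (F n)) (i p : ℕ) :
    SemiconjBy c (windowProd F (i + d) p) (windowProd F i p) := by
  induction p with
  | zero => exact SemiconjBy.one_right c
  | succ p ih =>
    rw [windowProd_succ, windowProd_succ, add_right_comm]
    exact ih.mul_right (hF _)

theorem semiconjBy_pow_add_mul (hF : ∀ n, SemiconjBy c (F (n + d)) (F n)) (k n : ℕ) :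
    SemiconjBy (c ^ k) (F (n + k * d)) (F n) := by
  induction k with
  | zero => simp
  | succ k ih =>
    rw [pow_succ, add_one_mul, ← add_assoc]
    exact ih.mul_left (hF _)

theorem semiconjBy_of_forall_windowProd_eq {D : H} {ℓ : ℕ} (hF : ∀ i, windowProd F i ℓ = D)
    (n : ℕ) : SemiconjBy D (F (n + ℓ)) (F n) :=
  calc D * F (n + ℓ) = windowProd F n (ℓ + 1) := by rw [windowProd_succ, hF]
    _ = F n * D := by rw [windowProd_succ', hF]

end Monoid

section Group

variable {H : Type*} [Group H] {F : ℕ → H} {c : H} {d : ℕ}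

theorem windowProd_eq_of_semiconjBy {ℓ : ℕ}
    (hF : ∀ n, SemiconjBy (windowProd F 0 ℓ) (F (n + ℓ)) (F n)) (i : ℕ) :
    windowProd F i ℓ = windowProd F 0 ℓ := by
  induction i with
  | zero => rfl
  | succ i ih =>
    apply mul_left_cancel (a := F i)
    rw [← windowProd_succ', windowProd_succ, ih, hF i]

theorem windowProd_mul (hF : ∀ n, SemiconjBy c (F (n + d)) (F n)) (i k : ℕ) :
    windowProd F i (k * d) = (windowProd F i d * c⁻¹) ^ k * c ^ k := by
  induction k with
  | zero => simp [windowProd_zero]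
  | succ k ih =>
    have hshift : windowProd F (i + d) (k * d) = c⁻¹ * (windowProd F i (k * d) * c) :=
      eq_inv_mul_of_mul_eq (semiconjBy_windowProd hF i (k * d))
    rw [add_one_mul, add_comm, windowProd_add, hshift, ih, pow_succ', pow_succ c]
    simp only [mul_assoc]

theorem eq_of_semiconjBy_add {F' : ℕ → H} (hd : 0 < d)
    (hF : ∀ n, SemiconjBy c (F (n + d)) (F n)) (hF' : ∀ n, SemiconjBy c (F' (n + d)) (F' n))
    (h : ∀ k < d, F k = F' k) : F = F' := by
  funext n
  have hn := semiconjBy_pow_add_mul hF (n / d) (n % d)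
  have hn' := semiconjBy_pow_add_mul hF' (n / d) (n % d)
  rw [mul_comm, Nat.mod_add_div] at hn hn'
  exact mul_left_cancel (hn.eq.trans (h _ (Nat.mod_lt n hd) ▸ hn'.eq.symm))

/-- The sequence `F` with `F (n + d) = c⁻¹ * F n * c` whose first `d` terms are `B`. -/
def conjExtend [NeZero d] (c : H) (B : Fin d → H) (n : ℕ) : H :=
  (c ^ (n / d))⁻¹ * B (Fin.ofNat d n) * c ^ (n / d)

theorem conjExtend_val [NeZero d] (c : H) (B : Fin d → H) (k : Fin d) :
    conjExtend c B k = B k := by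
  simp [conjExtend, Nat.div_eq_of_lt k.isLt]

theorem semiconjBy_conjExtend [NeZero d] (c : H) (B : Fin d → H) (n : ℕ) :
    SemiconjBy c (conjExtend c B (n + d)) (conjExtend c B n) := by
  have hB : Fin.ofNat d (n + d) = Fin.ofNat d n := Fin.ext (Nat.add_mod_right n d)
  rw [SemiconjBy, conjExtend, conjExtend, hB, Nat.add_div_right n (Nat.pos_of_neZero d), pow_succ]
  group

end Group

section CircularGroup

variable (m ℓ : ℕ)

/-- The `m`-periodic sequence of generators of `G(m,ℓ)`, indexed by natural numbers. -/
def circSeq (n : ℕ) : CircularGroup m ℓ := circGen m ℓ (n : ZMod m)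

variable {m ℓ}

theorem circSeq_eq_of_modEq {n k : ℕ} (h : n ≡ k [MOD m]) : circSeq m ℓ n = circSeq m ℓ k := by
  rw [circSeq, (ZMod.natCast_eq_natCast_iff n k m).mpr h, circSeq]

theorem circS_natCast (i p : ℕ) : circS m ℓ (i : ZMod m) p = windowProd (circSeq m ℓ) i p := by
  simp [circS, windowProd, circSeq, ← List.map_eq_flatMap, Function.comp_def]

theorem circS_eq_mk (i : ZMod m) (p : ℕ) :
    circS m ℓ i p = PresentedGroup.mk (circRels m ℓ) (circWord m i p) := by
  simp only [circS, circWord, map_list_prod, List.map_map]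
  rfl

theorem circS_add_one (i : ZMod m) : circS m ℓ (i + 1) ℓ = circS m ℓ i ℓ := by
  rw [circS_eq_mk, circS_eq_mk, eq_comm, ← mul_inv_eq_one, ← map_inv, ← map_mul]
  exact PresentedGroup.one_of_mem ⟨i, rfl⟩

theorem windowProd_circSeq (i : ℕ) : windowProd (circSeq m ℓ) i ℓ = circDelta m ℓ := by
  rw [← circS_natCast]
  induction i with
  | zero => rw [Nat.cast_zero, circDelta]
  | succ i ih => rw [Nat.cast_succ, circS_add_one, ih]

theorem semiconjBy_circDelta (n : ℕ) :
    SemiconjBy (circDelta m ℓ) (circSeq m ℓ (n + ℓ)) (circSeq m ℓ n) :=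
  semiconjBy_of_forall_windowProd_eq windowProd_circSeq n

theorem semiconjBy_circDelta_pow {k r : ℕ} (h : k * ℓ ≡ r [MOD m]) (n : ℕ) :
    SemiconjBy (circDelta m ℓ ^ k) (circSeq m ℓ (n + r)) (circSeq m ℓ n) := by
  rw [← circSeq_eq_of_modEq (h.add_left n)]
  exact semiconjBy_pow_add_mul semiconjBy_circDelta k n

variable [NeZero m] {H : Type*} [Group H]

theorem closure_range_circSeq : Subgroup.closure (Set.range (circSeq m ℓ)) = ⊤ := by
  rw [← PresentedGroup.closure_range_of]
  congr 1
  exact (ZMod.natCast_zmod_surjective (n := m)).range_comp (circGen m ℓ)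

theorem circDelta_pow_mem_center {k : ℕ} (h : m ∣ k * ℓ) :
    circDelta m ℓ ^ k ∈ Subgroup.center (CircularGroup m ℓ) := by
  rw [Subgroup.center_eq_iInf closure_range_circSeq]
  simp only [Subgroup.mem_iInf, Set.forall_mem_range, Subgroup.mem_centralizer_singleton_iff]
  exact semiconjBy_circDelta_pow (Nat.modEq_zero_iff_dvd.mpr h)

/-- The homomorphism from `G(m,ℓ)` determined by an `m`-periodic sequence in which all products
of `ℓ` consecutive terms agree. -/
def circLift {F : ℕ → H} {D : H} (hper : Function.Periodic F m)
    (hF : ∀ i, windowProd F i ℓ = D) : CircularGroup m ℓ →* H :=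
  PresentedGroup.toGroup (f := fun j : ZMod m => F j.val) <| by
    have hword (i : ZMod m) :
        FreeGroup.lift (fun j : ZMod m => F j.val) (circWord m i ℓ) = D := by
      have hval (k : ℕ) : F (i + (k : ZMod m)).val = F (i.val + k) := by
        rw [ZMod.val_add, ZMod.val_natCast, Nat.add_mod_mod, hper.map_mod_nat]
      simp [← hF i.val, circWord, map_list_prod, windowProd, ← List.map_eq_flatMap,
        Function.comp_def, hval]
    rintro r ⟨i, rfl⟩
    rw [map_mul, map_inv, hword, hword, mul_inv_cancel]

theorem circLift_circSeq {F : ℕ → H} {D : H} (hper : Function.Periodic F m)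
    (hF : ∀ i, windowProd F i ℓ = D) (n : ℕ) : circLift hper hF (circSeq m ℓ n) = F n := by
  rw [circLift, circSeq, circGen, PresentedGroup.toGroup.of, ZMod.val_natCast, hper.map_mod_nat]

theorem circLift_circDelta {F : ℕ → H} {D : H} (hper : Function.Periodic F m)
    (hF : ∀ i, windowProd F i ℓ = D) : circLift hper hF (circDelta m ℓ) = D := by
  rw [← windowProd_circSeq 0, map_windowProd]
  simp only [circLift_circSeq, hF]

theorem not_isOfFinOrder_circDelta (hℓ : ℓ ≠ 0) : ¬ IsOfFinOrder (circDelta m ℓ) := by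
  let F : ℕ → Multiplicative ℤ := fun _ => Multiplicative.ofAdd 1
  have hF (i : ℕ) : windowProd F i ℓ = Multiplicative.ofAdd (ℓ : ℤ) := by
    simp [F, windowProd, ← ofAdd_nsmul]
  obtain ⟨degree, hdegree⟩ :
      ∃ f : CircularGroup m ℓ →* Multiplicative ℤ,
        f (circDelta m ℓ) = Multiplicative.ofAdd (ℓ : ℤ) :=
    ⟨circLift (fun _ => rfl) hF, circLift_circDelta _ hF⟩
  intro h
  have hfin := degree.isOfFinOrder h
  rw [hdegree, isOfFinOrder_iff_eq_one, ofAdd_eq_one] at hfin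
  exact hℓ (by exact_mod_cast hfin)

end CircularGroup

section CentralQuotient

/-- The orders of the cyclic factors of the quotient of `G(ad, bd)` by `⟨Δ ^ a⟩`, for `a` and `b`
coprime. The positive number `d` is written `e + 1`. The generators of the factors are the images
of `τ = Δ ^ u` (with `u b ≡ 1` modulo `a`) at `inl 0`, `a_0 ⋯ a_{d-1} τ⁻¹` at `inl 1`, and
`a_{r+1}` at `inr r`. -/
def circOrders (e a b : ℕ) : Fin 2 ⊕ Fin e → ℕ := Sum.elim ![a, b] 0

open CyclicFreeProduct
open Sum (inl inr)

variable {e a b : ℕ}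

theorem center_cyclicFreeProduct_circOrders (hm : 2 ≤ a * (e + 1)) (hℓ : 2 ≤ b * (e + 1))
    (hne : (a * (e + 1), b * (e + 1)) ≠ (2, 2)) :
    Subgroup.center (CyclicFreeProduct (circOrders e a b)) = ⊥ := by
  obtain rfl | rfl | he : e = 0 ∨ e = 1 ∨ 2 ≤ e := by omega
  · have ha : a ≠ 1 := by omega
    have hb : b ≠ 1 := by omega
    exact center_eq_bot (p := inl 0) (q := inl 1) (by simp) ha hb
  · by_cases ha : a = 1
    · have hb : b ≠ 1 := fun hb => hne (by simp [ha, hb])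
      exact center_eq_bot (p := inl 1) (q := inr 0) (by simp) hb (by simp [circOrders])
    · exact center_eq_bot (p := inl 0) (q := inr 0) (by simp) ha (by simp [circOrders])
  · exact center_eq_bot (p := inr ⟨0, by omega⟩) (q := inr ⟨1, by omega⟩) (by simp)
      (by simp [circOrders]) (by simp [circOrders])

/-- The images of the generators `a_n` of `G(a(e+1), b(e+1))` in the free product. That of `a_0` is
solved from `a_0 a_1 ⋯ a_e = υ τ`, where `τ` and `υ` are the generators at `inl 0` and `inl 1`. -/
def circImage (e a b : ℕ) : ℕ → CyclicFreeProduct (circOrders e a b) :=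
  conjExtend (gen _ (inl 0)) <| Fin.cons
    (gen _ (inl 1) * gen _ (inl 0) * (List.ofFn fun r => gen _ (inr r)).prod⁻¹)
    fun r => gen _ (inr r)

theorem circImage_zero :
    circImage e a b 0 =
      gen _ (inl 1) * gen _ (inl 0) * (List.ofFn fun r => gen _ (inr r)).prod⁻¹ :=
  conjExtend_val _ _ 0

theorem circImage_succ (r : Fin e) : circImage e a b (r + 1) = gen _ (inr r) :=
  conjExtend_val _ _ r.succ

theorem semiconjBy_circImage (n : ℕ) :
    SemiconjBy (gen _ (inl 0)) (circImage e a b (n + (e + 1))) (circImage e a b n) :=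
  semiconjBy_conjExtend _ _ n

theorem circImage_periodic : Function.Periodic (circImage e a b) (a * (e + 1)) := by
  intro n
  have h := semiconjBy_pow_add_mul (semiconjBy_circImage (e := e) (a := a) (b := b)) a n
  have hpow : gen (circOrders e a b) (inl 0) ^ a = 1 := gen_pow (inl 0)
  simpa [SemiconjBy, hpow] using h

theorem windowProd_circImage :
    windowProd (circImage e a b) 0 (e + 1) = gen _ (inl 1) * gen _ (inl 0) := by
  simp [windowProd_zero_eq_prod_ofFn, List.ofFn_succ, circImage_zero, circImage_succ]

theorem windowProd_circImage_mul (i : ℕ) :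
    windowProd (circImage e a b) i (b * (e + 1)) = gen _ (inl 0) ^ b := by
  have hzero : windowProd (circImage e a b) 0 (b * (e + 1)) = gen _ (inl 0) ^ b := by
    have hpow : gen (circOrders e a b) (inl 1) ^ b = 1 := gen_pow (inl 1)
    rw [windowProd_mul semiconjBy_circImage, windowProd_circImage, mul_inv_cancel_right, hpow,
      one_mul]
  rw [← hzero]
  apply windowProd_eq_of_semiconjBy
  rw [hzero]
  exact semiconjBy_pow_add_mul semiconjBy_circImage b

theorem exists_map_circImage_eq {K : Type*} [Group K] {A : ℕ → K} {c : K} (hca : c ^ a = 1)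
    (hA : ∀ n, SemiconjBy c (A (n + (e + 1))) (A n))
    (hAb : windowProd A 0 (b * (e + 1)) = c ^ b) :
    ∃ g : CyclicFreeProduct (circOrders e a b) →* K,
      ∀ n, g (circImage e a b n) = A n := by
  let W := windowProd A 0 (e + 1)
  have hW : (W * c⁻¹) ^ b = 1 := by
    rwa [windowProd_mul hA, mul_eq_right] at hAb
  let h : Fin 2 ⊕ Fin e → K := Sum.elim ![c, W * c⁻¹] fun r => A (r + 1)
  have hh : ∀ i, h i ^ circOrders e a b i = 1 := by
    rintro (i | r)
    · fin_cases i
      · exact hca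
      · exact hW
    · exact pow_zero _
  let g := lift h hh
  have hgτ : g (gen _ (inl 0)) = c := lift_gen h hh _
  have hgυ : g (gen _ (inl 1)) = W * c⁻¹ := lift_gen h hh _
  have hgξ (r : Fin e) : g (gen _ (inr r)) = A (r + 1) := lift_gen h hh _
  have hW_succ : W = A 0 * (List.ofFn fun r : Fin e => A (r + 1)).prod := by
    simp [W, windowProd_zero_eq_prod_ofFn, List.ofFn_succ]
  have hg : (fun n => g (circImage e a b n)) = A := by
    refine eq_of_semiconjBy_add e.succ_pos (fun n => ?_) hA fun k hk => ?_
    · exact hgτ ▸ (semiconjBy_circImage n).map g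
    · obtain _ | k := k
      · simp [circImage_zero, map_list_prod, List.map_ofFn, Function.comp_def, hgτ, hgυ, hgξ,
          hW_succ]
      · exact (congrArg g (circImage_succ ⟨k, by omega⟩)).trans (hgξ _)
  exact ⟨g, congrFun hg⟩

variable [NeZero a]

/-- The homomorphism from `G(a(e+1), b(e+1))` to the free product given by `circImage`; for `a` and
`b` coprime it is the quotient map by `⟨Δ ^ a⟩`. -/
def circProj (e a b : ℕ) [NeZero a] :
    CircularGroup (a * (e + 1)) (b * (e + 1)) →* CyclicFreeProduct (circOrders e a b) :=
  circLift circImage_periodic windowProd_circImage_mul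

theorem circProj_circSeq (n : ℕ) : circProj e a b (circSeq _ _ n) = circImage e a b n :=
  circLift_circSeq _ _ n

theorem circProj_circDelta : circProj e a b (circDelta _ _) = gen _ (inl 0) ^ b :=
  circLift_circDelta _ _

theorem circProj_surjective (hab : a.Coprime b) : Function.Surjective (circProj e a b) := by
  rw [← MonoidHom.range_eq_top]
  apply eq_top_of_forall_gen_mem
  have hτ : gen _ (inl 0) ∈ (circProj e a b).range := by
    have hord : orderOf (gen (circOrders e a b) (inl 0)) ∣ a :=
      orderOf_dvd_of_pow_eq_one (gen_pow (inl 0))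
    obtain ⟨k, hk⟩ := exists_pow_eq_self_of_coprime (hab.symm.of_dvd_right hord)
    exact ⟨circDelta _ _ ^ k, by rw [map_pow, circProj_circDelta, hk]⟩
  rintro (i | r)
  · fin_cases i
    · exact hτ
    · refine (Subgroup.mul_mem_cancel_right _ hτ).mp ⟨windowProd (circSeq _ _) 0 (e + 1), ?_⟩
      simp only [map_windowProd, circProj_circSeq]
      exact windowProd_circImage
  · exact ⟨circSeq _ _ (r + 1), by rw [circProj_circSeq, circImage_succ]⟩

theorem exists_comp_circProj_eq (hab : a.Coprime b) {K : Type*} [Group K]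
    (f : CircularGroup (a * (e + 1)) (b * (e + 1)) →* K) (hf : f (circDelta _ _) ^ a = 1) :
    ∃ g : CyclicFreeProduct (circOrders e a b) →* K, g.comp (circProj e a b) = f := by
  obtain ⟨u, hu⟩ : ∃ u, u * b ≡ 1 [MOD a] :=
    ⟨b ^ (a.totient - 1), by
      rw [← pow_succ, Nat.sub_add_cancel (Nat.totient_pos.mpr (Nat.pos_of_neZero a))]
      exact Nat.ModEq.pow_totient hab.symm⟩
  have hpow : (f (circDelta _ _) ^ u) ^ b = f (circDelta _ _) := by
    rw [← pow_mul]
    simpa using pow_eq_pow_iff_modEq.mpr (hu.of_dvd (orderOf_dvd_of_pow_eq_one hf))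
  have hconj (n : ℕ) : SemiconjBy (f (circDelta _ _) ^ u) (f (circSeq _ _ (n + (e + 1))))
      (f (circSeq _ _ n)) := by
    have hu' : u * (b * (e + 1)) ≡ e + 1 [MOD a * (e + 1)] := by
      simpa [mul_assoc] using hu.mul_right' (e + 1)
    simpa using (semiconjBy_circDelta_pow hu' n).map f
  obtain ⟨g, hg⟩ := exists_map_circImage_eq (A := fun n => f (circSeq _ _ n))
    (by rw [pow_right_comm, hf, one_pow]) hconj
    (by rw [hpow, ← map_windowProd, windowProd_circSeq])
  refine ⟨g, MonoidHom.eq_of_eqOn_dense closure_range_circSeq ?_⟩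
  rintro _ ⟨n, rfl⟩
  rw [MonoidHom.comp_apply, circProj_circSeq, hg]

theorem ker_circProj_le (hab : a.Coprime b) :
    (circProj e a b).ker ≤ Subgroup.zpowers (circDelta _ _ ^ a) := by
  let N := Subgroup.zpowers (circDelta (a * (e + 1)) (b * (e + 1)) ^ a)
  have hN : N ≤ Subgroup.center _ := Subgroup.zpowers_le.mpr (circDelta_pow_mem_center ⟨b, by ring⟩)
  have : N.Normal := ⟨fun x hx y => by
    rwa [Subgroup.mem_center_iff.mp (hN hx) y, mul_inv_cancel_right]⟩
  have hΔ : QuotientGroup.mk' N (circDelta _ _) ^ a = 1 := by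
    rw [← map_pow]
    exact (QuotientGroup.eq_one_iff _).mpr (Subgroup.mem_zpowers _)
  obtain ⟨g, hg⟩ := exists_comp_circProj_eq hab (QuotientGroup.mk' N) hΔ
  calc (circProj e a b).ker ≤ (g.comp (circProj e a b)).ker := by
        rw [← MonoidHom.comap_ker]
        exact MonoidHom.ker_le_comap _ _
    _ = N := by rw [hg, QuotientGroup.ker_mk']

end CentralQuotient

/-- For `m, ℓ ≥ 2` with `(m,ℓ) ≠ (2,2)`, the center of `G(m,ℓ)` is infinite cyclic,
generated by `Δ^(m / gcd(m,ℓ))`. -/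
theorem center_circular_group (m ℓ : ℕ) (hm : 2 ≤ m) (hℓ : 2 ≤ ℓ) (hne : (m, ℓ) ≠ (2, 2)) :
    (∀ k : ℤ, k ≠ 0 → ((circDelta m ℓ) ^ (m / Nat.gcd m ℓ)) ^ k ≠ 1) ∧
    Subgroup.center (CircularGroup m ℓ) =
      Subgroup.zpowers ((circDelta m ℓ) ^ (m / Nat.gcd m ℓ)) := by
  obtain ⟨a, b, hab, hma, hℓb⟩ := Nat.exists_coprime m ℓ
  have hgcd : 0 < m.gcd ℓ := Nat.gcd_pos_of_pos_left ℓ (by omega)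
  generalize m.gcd ℓ = d at *
  subst hma hℓb
  obtain ⟨e, rfl⟩ := Nat.exists_eq_add_one.mpr hgcd
  have ha : a ≠ 0 := by
    rintro rfl
    simp at hm
  have : NeZero a := ⟨ha⟩
  rw [Nat.mul_div_cancel a hgcd]
  constructor
  · intro k hk h
    refine not_isOfFinOrder_circDelta (m := a * (e + 1)) (ℓ := b * (e + 1)) (by omega) ?_
    exact (isOfFinOrder_iff_zpow_eq_one.mpr ⟨k, hk, h⟩).of_pow ha
  · apply le_antisymm
    · exact (center_le_ker_of_surjective (circProj_surjective hab)
        (center_cyclicFreeProduct_circOrders hm hℓ hne)).trans (ker_circProj_le hab)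
    · exact Subgroup.zpowers_le.mpr (circDelta_pow_mem_center ⟨b, by ring⟩)
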